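/- Suppose f satisfies the local condition. Then both limits L₁ = lim_{x→∞} (log x)·∏_{p ≤ x} (1 − ν₁(p)/(p − 1)) and L₂ = lim_{x→∞} (log x)²·∏_{p ≤ x} (1 − ν₂(p)/p) exist, are positive, and satisfy L₂ = e^{−γ}·L₁, where γ is Euler's constant. -/

import Mathlib

open Polynomial Filter

/-- ν₁(d) = #{a mod d : gcd(a,d) = 1 and f(a) ≡ 0 (mod d)} -/
def nu1 (f : Polynomial ℤ) (d : ℕ) : ℕ :=
  ((Finset.range d).filter (fun a : ℕ => Nat.gcd a d = 1 ∧ (d : ℤ) ∣ f.eval (a : ℤ))).card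

/-- ν₂(d) = #{a mod d : a·f(a) ≡ 0 (mod d)} -/
def nu2 (f : Polynomial ℤ) (d : ℕ) : ℕ :=
  ((Finset.range d).filter (fun a : ℕ => (d : ℤ) ∣ (a : ℤ) * f.eval (a : ℤ))).card

/-- A nonnegative weight `a` on points `t ≥ 0` whose Laplace transform is
`-log δ + C + o(1)` as `δ → 0+`. -/
structure IsLogLaplace (a t : ℕ → ℝ) (C : ℝ) : Prop where
  nonneg : ∀ n, 0 ≤ a n
  support_nonneg : ∀ n, 0 ≤ t n
  summable : ∀ δ : ℝ, 0 < δ → Summable fun n => a n * Real.exp (-(δ * t n))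
  tendsto : Tendsto (fun δ : ℝ => (∑' n, a n * Real.exp (-(δ * t n))) + Real.log δ)
    (nhdsWithin 0 (Set.Ioi 0)) (nhds C)

namespace IsLogLaplace

variable {a t b s : ℕ → ℝ} {C D : ℝ}

lemma summable_mul (h : IsLogLaplace a t C) {δ : ℝ} (hδ : 0 < δ) {q : ℝ → ℝ} {M : ℝ}
    (hq : ∀ y ∈ Set.Icc (0 : ℝ) 1, |q y| ≤ M * y) :
    Summable fun n => a n * q (Real.exp (-(δ * t n))) := by
  refine Summable.of_norm_bounded ((h.summable δ hδ).mul_left M) fun n => ?_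
  have := hq (Real.exp (-(δ * t n))) ⟨(Real.exp_pos _).le,
    Real.exp_le_one_iff.2 (by have := mul_nonneg hδ.le (h.support_nonneg n); linarith)⟩
  rw [norm_mul, Real.norm_of_nonneg (h.nonneg n), Real.norm_eq_abs]
  calc _ ≤ a n * (M * Real.exp (-(δ * t n))) := mul_le_mul_of_nonneg_left this (h.nonneg n)
    _ = _ := by ring

lemma exp_mem (h : IsLogLaplace a t C) {δ : ℝ} (hδ : 0 < δ) (n : ℕ) :
    Real.exp (-(δ * t n)) ∈ Set.Icc (0 : ℝ) 1 :=
  ⟨(Real.exp_pos _).le,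
    Real.exp_le_one_iff.2 (by have := mul_nonneg hδ.le (h.support_nonneg n); linarith)⟩

lemma tendsto_scaled (h : IsLogLaplace a t C) {c : ℝ} (hc : 0 < c) :
    Tendsto (fun δ : ℝ => (∑' n, a n * Real.exp (-(c * δ * t n))) + Real.log δ)
    (nhdsWithin 0 (Set.Ioi 0)) (nhds (C - Real.log c)) := by
  have h1 : Tendsto (fun δ : ℝ => c * δ) (nhdsWithin 0 (Set.Ioi 0)) (nhdsWithin 0 (Set.Ioi 0)) := by
    refine tendsto_nhdsWithin_iff.2 ⟨?_, ?_⟩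
    · have : Tendsto (fun δ : ℝ => c * δ) (nhds 0) (nhds (c * 0)) :=
        (continuous_const.mul continuous_id).tendsto 0
      rw [mul_zero] at this
      exact this.mono_left nhdsWithin_le_nhds
    · filter_upwards [self_mem_nhdsWithin] with δ hδ using mul_pos hc hδ
  refine ((h.tendsto.comp h1).sub_const (Real.log c)).congr' ?_
  filter_upwards [self_mem_nhdsWithin] with δ hδ
  simp only [Function.comp]
  rw [Real.log_mul hc.ne' (ne_of_gt hδ)]
  ring

lemma polynomial_bound (P : ℝ[X]) :
    ∃ M, ∀ y ∈ Set.Icc (0 : ℝ) 1, |y * (1 - y) * P.eval y| ≤ M * y := by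
  obtain ⟨M, hM⟩ := (isCompact_Icc (a := (0 : ℝ)) (b := 1)).exists_bound_of_continuousOn
    P.continuous.continuousOn
  refine ⟨M, fun y hy => ?_⟩
  have h1 := hM y hy
  rw [Real.norm_eq_abs] at h1
  rw [abs_mul, abs_of_nonneg (mul_nonneg hy.1 (by linarith [hy.2]))]
  have : (1 - y) * |P.eval y| ≤ M := by nlinarith [hy.1, abs_nonneg (P.eval y)]
  nlinarith [hy.1]

/-- The moments of a log-Laplace system do not depend on the system. -/
lemma exists_tendsto_polynomial (ha : IsLogLaplace a t C) (hb : IsLogLaplace b s D) (P : ℝ[X]) :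
    ∃ l : ℝ,
      Tendsto (fun δ : ℝ => ∑' n, a n * (fun y => y * (1 - y) * P.eval y) (Real.exp (-(δ * t n))))
        (nhdsWithin 0 (Set.Ioi 0)) (nhds l) ∧
      Tendsto (fun δ : ℝ => ∑' n, b n * (fun y => y * (1 - y) * P.eval y) (Real.exp (-(δ * s n))))
        (nhdsWithin 0 (Set.Ioi 0)) (nhds l) := by
  induction P using Polynomial.induction_on' with
  | add P Q hP hQ =>
    obtain ⟨l, h1, h2⟩ := hP
    obtain ⟨m, h3, h4⟩ := hQ
    obtain ⟨M, hM⟩ := polynomial_bound P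
    obtain ⟨N, hN⟩ := polynomial_bound Q
    refine ⟨l + m, (h1.add h3).congr' ?_, (h2.add h4).congr' ?_⟩
    · filter_upwards [self_mem_nhdsWithin] with δ hδ
      rw [← (ha.summable_mul hδ hM).tsum_add (ha.summable_mul hδ hN)]
      congr 1 with n
      simp only [eval_add]; ring
    · filter_upwards [self_mem_nhdsWithin] with δ hδ
      rw [← (hb.summable_mul hδ hM).tsum_add (hb.summable_mul hδ hN)]
      congr 1 with n
      simp only [eval_add]; ring
  | monomial m c =>
    have key : ∀ {a t : ℕ → ℝ} {C : ℝ}, IsLogLaplace a t C →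
        Tendsto (fun δ : ℝ => ∑' n, a n *
          (fun y => y * (1 - y) * (monomial m c).eval y) (Real.exp (-(δ * t n))))
        (nhdsWithin 0 (Set.Ioi 0)) (nhds (c * (Real.log (m + 2 : ℝ) - Real.log (m + 1 : ℝ)))) := by
      intro a t C h
      have h1 := h.tendsto_scaled (c := m + 1) (by positivity)
      have h2 := h.tendsto_scaled (c := m + 2) (by positivity)
      have h3 := (h1.sub h2).const_mul c
      rw [show C - Real.log (m + 1 : ℝ) - (C - Real.log (m + 2 : ℝ)) =
        Real.log (m + 2 : ℝ) - Real.log (m + 1 : ℝ) by ring] at h3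
      refine h3.congr' ?_
      filter_upwards [self_mem_nhdsWithin] with δ hδ
      have hδ : 0 < δ := hδ
      have s1 := h.summable ((m + 1) * δ) (by positivity)
      have s2 := h.summable ((m + 2) * δ) (by positivity)
      rw [add_sub_add_right_eq_sub, ← s1.tsum_sub s2, ← tsum_mul_left]
      congr 1 with n
      have e1 : Real.exp (-((m + 1) * δ * t n)) = Real.exp (-(δ * t n)) ^ (m + 1) := by
        rw [← Real.exp_nat_mul]; congr 1; push_cast; ring
      have e2 : Real.exp (-((m + 2) * δ * t n)) = Real.exp (-(δ * t n)) ^ (m + 2) := by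
        rw [← Real.exp_nat_mul]; congr 1; push_cast; ring
      rw [e1, e2]
      simp only [eval_monomial]
      ring
    exact ⟨_, key ha, key hb⟩

lemma summable_ite (h : IsLogLaplace a t C) (T : ℝ) :
    Summable fun n => if t n ≤ T then a n else 0 := by
  refine Summable.of_nonneg_of_le (fun n => ?_) (fun n => ?_)
    ((h.summable 1 one_pos).mul_left (Real.exp T))
  · split_ifs
    exacts [h.nonneg n, le_rfl]
  · split_ifs with hn
    · have : 1 ≤ Real.exp T * Real.exp (-(1 * t n)) := by
        rw [← Real.exp_add]; exact Real.one_le_exp (by linarith)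
      nlinarith [h.nonneg n]
    · exact mul_nonneg (Real.exp_pos _).le (mul_nonneg (h.nonneg n) (Real.exp_pos _).le)

/-- A continuous cutoff between the thresholds `v < u` can be written, up to the identity, as
`y * (1 - y)` times a continuous function. -/
lemma exists_cutoff {u v : ℝ} (hv : 0 < v) (hvu : v < u) (hu : u < 1) :
    ∃ φ q : ℝ → ℝ, Continuous q ∧ (∀ y ∈ Set.Icc (0 : ℝ) 1, φ y - y = y * (1 - y) * q y) ∧
      (∀ y, 0 ≤ φ y) ∧ (∀ y, φ y ≤ 1) ∧ (∀ y, u ≤ y → φ y = 1) ∧ (∀ y, y ≤ v → φ y = 0) := by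
  set φ : ℝ → ℝ := fun y => max 0 (min 1 ((y - v) / (u - v))) with hφ
  have hd : 0 < u - v := sub_pos.2 hvu
  have hφc : Continuous φ := by fun_prop
  have h1 : ∀ y, u ≤ y → φ y = 1 := fun y hy => by
    have : 1 ≤ (y - v) / (u - v) := by rw [le_div_iff₀ hd]; linarith
    simp [hφ, this]
  have h0 : ∀ y, y ≤ v → φ y = 0 := fun y hy => by
    have : (y - v) / (u - v) ≤ 0 := div_nonpos_of_nonpos_of_nonneg (by linarith) hd.le
    simp [hφ, this]
  refine ⟨φ, fun y => φ y / max y v - (1 - φ y) / max (1 - y) (1 - u), ?_, ?_, ?_, ?_, h1, h0⟩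
  · refine (hφc.div (by fun_prop) fun y => ?_).sub
      ((continuous_const.sub hφc).div (by fun_prop) fun y => ?_)
    · exact (lt_max_of_lt_right hv).ne'
    · exact (lt_max_of_lt_right (sub_pos.2 hu)).ne'
  · intro y hy
    have e1 : y * (φ y / max y v) = φ y := by
      rcases le_or_gt y v with h | h
      · simp [h0 y h]
      · rw [max_eq_left h.le]; field_simp [(hv.trans h).ne']
    have e2 : (1 - y) * ((1 - φ y) / max (1 - y) (1 - u)) = 1 - φ y := by
      rcases le_or_gt u y with h | h
      · simp [h1 y h]
      · rw [max_eq_left (by linarith)]; field_simp [(show (1 - y) ≠ 0 by linarith)]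
    linear_combination (-(1 - y)) * e1 + y * e2
  · exact fun y => le_max_left _ _
  · exact fun y => max_le zero_le_one (min_le_left _ _)

/-- One-sided comparison of the counting functions of two log-Laplace systems. -/
lemma eventually_le (ha : IsLogLaplace a t C) (hb : IsLogLaplace b s D) {r ε : ℝ} (hr : 1 < r)
    (hε : 0 < ε) : ∀ᶠ T in atTop, (∑' n, if t n ≤ T then a n else 0) ≤
      (∑' n, if s n ≤ r * T then b n else 0) + (C - D) + ε := by
  obtain ⟨φ, q, hq, hφq, hφ0, hφ1, hφu, hφv⟩ := exists_cutoff (Real.exp_pos (-r))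
    (Real.exp_lt_exp.2 (neg_lt_neg hr)) (Real.exp_lt_one_iff.2 (by norm_num : (-1 : ℝ) < 0))
  obtain ⟨η, hη, hηε⟩ : ∃ η : ℝ, 0 < η ∧ 8 * η = ε := ⟨ε / 8, by positivity, by ring⟩
  obtain ⟨P, hP⟩ := exists_polynomial_near_of_continuousOn 0 1 q hq.continuousOn η hη
  obtain ⟨l, hl1, hl2⟩ := ha.exists_tendsto_polynomial hb (P + Polynomial.C η)
  obtain ⟨m, -, hm⟩ := ha.exists_tendsto_polynomial hb 1
  have hm' : m = Real.log 2 := by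
    obtain ⟨m', h1, h2⟩ := hb.exists_tendsto_polynomial hb 1
    have h3 := (hb.tendsto_scaled (c := 1) one_pos).sub (hb.tendsto_scaled (c := 2) two_pos)
    refine tendsto_nhds_unique hm ?_
    rw [show D - Real.log 1 - (D - Real.log 2) = Real.log 2 by simp] at h3
    refine h3.congr' ?_
    filter_upwards [self_mem_nhdsWithin] with δ hδ
    have hδ : 0 < δ := hδ
    have s1 := hb.summable (1 * δ) (by positivity)
    have s2 := hb.summable (2 * δ) (by positivity)
    rw [add_sub_add_right_eq_sub, ← s1.tsum_sub s2]
    congr 1 with n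
    have e2 : Real.exp (-(2 * δ * s n)) = Real.exp (-(δ * s n)) ^ 2 := by
      rw [← Real.exp_nat_mul]; congr 1; push_cast; ring
    rw [e2]
    simp only [eval_one, one_mul]
    ring
  have hinv : Tendsto (fun T : ℝ => T⁻¹) atTop (nhdsWithin 0 (Set.Ioi 0)) :=
    tendsto_inv_atTop_nhdsGT_zero
  have hlog2 : Real.log 2 < 1 := by linarith [Real.log_two_lt_d9]
  filter_upwards [(hl1.comp hinv).eventually (gt_mem_nhds (show l < l + η by linarith)),
    (hl2.comp hinv).eventually (lt_mem_nhds (show l - η < l by linarith)),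
    (hm.comp hinv).eventually (gt_mem_nhds (show m < 1 by rw [hm']; exact hlog2)),
    (ha.tendsto.comp hinv).eventually (gt_mem_nhds (show C < C + η by linarith)),
    (hb.tendsto.comp hinv).eventually (lt_mem_nhds (show D - η < D by linarith)),
    eventually_gt_atTop 0] with T h1 h2 h3 h4 h5 hT
  simp only [Function.comp] at h1 h2 h3 h4 h5
  have hδ : 0 < T⁻¹ := inv_pos.2 hT
  obtain ⟨M, hM⟩ := polynomial_bound (P + Polynomial.C η)
  obtain ⟨N, hN⟩ := polynomial_bound (1 : ℝ[X])
  have e1 : (∑' n, if t n ≤ T then a n else 0) ≤ (∑' n, a n * Real.exp (-(T⁻¹ * t n))) +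
      ∑' n, a n * (fun y => y * (1 - y) * (P + Polynomial.C η).eval y)
        (Real.exp (-(T⁻¹ * t n))) := by
    rw [← (ha.summable _ hδ).tsum_add (ha.summable_mul hδ hM)]
    refine (ha.summable_ite T).tsum_le_tsum (fun n => ?_)
      ((ha.summable _ hδ).add (ha.summable_mul hδ hM))
    have hy := ha.exp_mem hδ n
    have hyT : t n ≤ T → Real.exp (-1) ≤ Real.exp (-(T⁻¹ * t n)) := fun h =>
      Real.exp_le_exp.2 (neg_le_neg (by rw [inv_mul_le_iff₀ hT]; linarith))
    set y := Real.exp (-(T⁻¹ * t n))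
    have h6 : φ y ≤ y + y * (1 - y) * (P + Polynomial.C η).eval y := by
      have h7 := hφq y hy
      have h8 := (abs_lt.1 (hP y hy)).1
      have h9 : q y ≤ (P + Polynomial.C η).eval y := by simp only [eval_add, eval_C]; linarith
      have := mul_le_mul_of_nonneg_left h9 (mul_nonneg hy.1 (sub_nonneg.2 hy.2))
      linarith
    rw [← mul_add]
    split_ifs with h
    · rw [hφu y (hyT h)] at h6
      exact le_mul_of_one_le_right (ha.nonneg n) h6
    · exact mul_nonneg (ha.nonneg n) ((hφ0 y).trans h6)
  have e2 : (∑' n, b n * Real.exp (-(T⁻¹ * s n))) +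
      (∑' n, b n * (fun y => y * (1 - y) * (P + Polynomial.C η).eval y)
        (Real.exp (-(T⁻¹ * s n)))) ≤ (∑' n, if s n ≤ r * T then b n else 0) +
      2 * η * ∑' n, b n * (fun y => y * (1 - y) * (1 : ℝ[X]).eval y)
        (Real.exp (-(T⁻¹ * s n))) := by
    rw [← (hb.summable _ hδ).tsum_add (hb.summable_mul hδ hM), ← tsum_mul_left,
      ← (hb.summable_ite _).tsum_add ((hb.summable_mul hδ hN).mul_left _)]
    refine ((hb.summable _ hδ).add (hb.summable_mul hδ hM)).tsum_le_tsum (fun n => ?_)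
      ((hb.summable_ite _).add ((hb.summable_mul hδ hN).mul_left _))
    have hy := hb.exp_mem hδ n
    have hyT : ¬ s n ≤ r * T → Real.exp (-(T⁻¹ * s n)) ≤ Real.exp (-r) := fun h =>
      Real.exp_le_exp.2 (neg_le_neg (by rw [le_inv_mul_iff₀ hT]; linarith [not_le.1 h]))
    set y := Real.exp (-(T⁻¹ * s n))
    have h6 : y + y * (1 - y) * (P + Polynomial.C η).eval y ≤ φ y + 2 * η * (y * (1 - y)) := by
      have h7 := hφq y hy
      have h8 := (abs_lt.1 (hP y hy)).2
      have h9 : (P + Polynomial.C η).eval y ≤ q y + 2 * η := by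
        simp only [eval_add, eval_C]; linarith
      have := mul_le_mul_of_nonneg_left h9 (mul_nonneg hy.1 (sub_nonneg.2 hy.2))
      linarith
    have h7 := mul_le_mul_of_nonneg_left h6 (hb.nonneg n)
    have h8 : b n * φ y ≤ if s n ≤ r * T then b n else 0 := by
      split_ifs with h
      · exact mul_le_of_le_one_right (hb.nonneg n) (hφ1 y)
      · rw [hφv y (hyT h), mul_zero]
    simp only [eval_one, mul_one]
    linarith
  have h3' := mul_le_mul_of_nonneg_left h3.le (show 0 ≤ 2 * η by positivity)
  linarith

lemma harmonic : IsLogLaplace (fun n => (n : ℝ)⁻¹) (fun n => (n : ℝ)) 0 := by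
  have key : ∀ δ : ℝ, 0 < δ → HasSum (fun n : ℕ => (n : ℝ)⁻¹ * Real.exp (-(δ * n)))
      (-Real.log (1 - Real.exp (-δ))) := fun δ hδ => by
    have h1 : |Real.exp (-δ)| < 1 := by
      rw [abs_of_pos (Real.exp_pos _)]; exact Real.exp_lt_one_iff.2 (by linarith)
    have h2 := Real.hasSum_pow_div_log_of_abs_lt_one h1
    rw [← hasSum_nat_add_iff' 1]
    simp only [Finset.range_one, Finset.sum_singleton, Nat.cast_zero, inv_zero, zero_mul, sub_zero]
    convert! h2 using 2 with n
    rw [← Real.exp_nat_mul, div_eq_inv_mul]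
    push_cast
    congr 2
    ring
  refine ⟨fun n => by positivity, fun n => by positivity, fun δ hδ => (key δ hδ).summable, ?_⟩
  have h1 : Tendsto (fun δ : ℝ => (1 - Real.exp (-δ)) / δ) (nhdsWithin 0 (Set.Ioi 0)) (nhds 1) := by
    have h2 : HasDerivAt (fun δ : ℝ => 1 - Real.exp (-δ)) 1 0 := by
      have := ((hasDerivAt_id (0 : ℝ)).neg.exp).const_sub 1
      simpa using this
    have h3 := h2.tendsto_slope_zero_right
    simpa [div_eq_inv_mul] using h3
  have h2 := (Real.continuousAt_log one_ne_zero).tendsto.comp h1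
  rw [Real.log_one] at h2
  have h3 := h2.neg
  rw [neg_zero] at h3
  refine h3.congr' ?_
  filter_upwards [self_mem_nhdsWithin] with δ hδ
  have hδ : 0 < δ := hδ
  have : 0 < 1 - Real.exp (-δ) := sub_pos.2 (Real.exp_lt_one_iff.2 (by linarith))
  rw [(key δ hδ).tsum_eq, Function.comp, Real.log_div this.ne' hδ.ne']
  ring

lemma tendsto_harmonic_sum : Tendsto (fun T : ℝ =>
    (∑' n : ℕ, if (n : ℝ) ≤ T then (n : ℝ)⁻¹ else 0) - Real.log T) atTop
    (nhds Real.eulerMascheroniConstant) := by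
  have h1 := Real.tendsto_harmonic_sub_log.comp (tendsto_nat_floor_atTop (α := ℝ))
  have h2 : Tendsto (fun T : ℝ => Real.log ((⌊T⌋₊ : ℝ) / T)) atTop (nhds 0) := by
    have := (Real.continuousAt_log one_ne_zero).tendsto.comp
      (tendsto_nat_floor_div_atTop (R := ℝ))
    rw [Real.log_one] at this
    exact this
  have h3 := h1.add h2
  rw [add_zero] at h3
  refine h3.congr' ?_
  filter_upwards [eventually_ge_atTop 1] with T hT
  have hf : 0 < ⌊T⌋₊ := Nat.floor_pos.2 hT
  have e : (∑' n : ℕ, if (n : ℝ) ≤ T then (n : ℝ)⁻¹ else 0) = (_root_.harmonic ⌊T⌋₊ : ℝ) := by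
    rw [harmonic_eq_sum_Icc, tsum_eq_sum (s := Finset.Icc 1 ⌊T⌋₊)]
    · push_cast
      refine Finset.sum_congr rfl fun n hn => ?_
      rw [if_pos]
      exact (Nat.le_floor_iff (by linarith)).1 (Finset.mem_Icc.1 hn).2
    · intro n hn
      rcases Nat.eq_zero_or_pos n with rfl | h0
      · simp
      rw [if_neg]
      intro h
      exact hn (Finset.mem_Icc.2 ⟨h0, Nat.le_floor h⟩)
  rw [e]
  simp only [Function.comp]
  rw [Real.log_div (by positivity) (by positivity)]
  ring

/-- A Tauberian theorem in the style of Karamata and de Haan. -/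
theorem tendsto_sum_sub_log (h : IsLogLaplace a t C) : Tendsto (fun T : ℝ =>
    (∑' n : ℕ, if t n ≤ T then a n else 0) - Real.log T) atTop
    (nhds (C + Real.eulerMascheroniConstant)) := by
  refine tendsto_order.2 ⟨fun x hx => ?_, fun x hx => ?_⟩
  · obtain ⟨ε, hε, rfl⟩ : ∃ ε : ℝ, 0 < ε ∧ x = C + Real.eulerMascheroniConstant - 3 * ε :=
      ⟨(C + Real.eulerMascheroniConstant - x) / 3, by linarith, by ring⟩
    have hr : 1 < Real.exp ε := Real.one_lt_exp_iff.2 hε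
    have hr0 := Real.exp_pos ε
    have hdiv : Tendsto (fun T : ℝ => T / Real.exp ε) atTop atTop :=
      tendsto_id.atTop_div_const hr0
    filter_upwards [hdiv.eventually (harmonic.eventually_le h hr hε),
      hdiv.eventually (tendsto_harmonic_sum.eventually
      (lt_mem_nhds (show Real.eulerMascheroniConstant - ε < _ by linarith))),
      eventually_gt_atTop 0] with T h1 h2 hT
    rw [Real.log_div hT.ne' hr0.ne', Real.log_exp] at h2
    rw [mul_div_cancel₀ _ hr0.ne'] at h1
    linarith
  · obtain ⟨ε, hε, rfl⟩ : ∃ ε : ℝ, 0 < ε ∧ x = C + Real.eulerMascheroniConstant + 3 * ε :=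
      ⟨(x - (C + Real.eulerMascheroniConstant)) / 3, by linarith, by ring⟩
    have hr : 1 < Real.exp ε := Real.one_lt_exp_iff.2 hε
    have hr0 := Real.exp_pos ε
    have hmul : Tendsto (fun T : ℝ => Real.exp ε * T) atTop atTop :=
      tendsto_id.const_mul_atTop hr0
    filter_upwards [h.eventually_le harmonic hr hε,
      hmul.eventually (tendsto_harmonic_sum.eventually
      (gt_mem_nhds (show _ < Real.eulerMascheroniConstant + ε by linarith))),
      eventually_gt_atTop 0] with T h1 h2 hT
    rw [Real.log_mul hr0.ne' hT.ne', Real.log_exp] at h2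
    linarith

end IsLogLaplace

section LocalFactor

variable {d : ℕ → ℝ} {k : ℕ} {x : ℝ}

lemma summable_succ_pow_mul_half (k : ℕ) :
    Summable fun e : ℕ => ((e : ℝ) + 1) ^ k * (1 / 2 : ℝ) ^ e := by
  have h := summable_pow_mul_geometric_of_norm_lt_one k (r := (1 / 2 : ℝ)) (by norm_num)
  refine (((summable_nat_add_iff 1).2 h).mul_left 2).congr fun e => ?_
  push_cast
  ring

lemma localFactor_term_le (hd : ∀ e, 0 ≤ d e) (hdk : ∀ e, d e ≤ ((e : ℝ) + 1) ^ k)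
    (hx0 : 0 ≤ x) (hx : x ≤ 1 / 2) (e : ℕ) :
    ‖d e * x ^ e‖ ≤ ((e : ℝ) + 1) ^ k * (1 / 2 : ℝ) ^ e := by
  rw [Real.norm_of_nonneg (mul_nonneg (hd e) (pow_nonneg hx0 e))]
  exact mul_le_mul (hdk e) (pow_le_pow_left₀ hx0 hx e) (pow_nonneg hx0 e) (by positivity)

lemma summable_localFactor (hd : ∀ e, 0 ≤ d e) (hdk : ∀ e, d e ≤ ((e : ℝ) + 1) ^ k)
    (hx0 : 0 ≤ x) (hx : x ≤ 1 / 2) : Summable fun e => d e * x ^ e :=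
  Summable.of_norm_bounded (summable_succ_pow_mul_half k) (localFactor_term_le hd hdk hx0 hx)

lemma continuousOn_localFactor (hd : ∀ e, 0 ≤ d e) (hdk : ∀ e, d e ≤ ((e : ℝ) + 1) ^ k) :
    ContinuousOn (fun x : ℝ => ∑' e, d e * x ^ e) (Set.Icc 0 (1 / 2)) :=
  continuousOn_tsum (fun e => by fun_prop) (summable_succ_pow_mul_half k)
    fun e _ hx => localFactor_term_le hd hdk hx.1 hx.2 e

lemma one_le_localFactor (hd : ∀ e, 0 ≤ d e) (hdk : ∀ e, d e ≤ ((e : ℝ) + 1) ^ k)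
    (hd0 : d 0 = 1) (hx0 : 0 ≤ x) (hx : x ≤ 1 / 2) : 1 ≤ ∑' e, d e * x ^ e := by
  have := (summable_localFactor hd hdk hx0 hx).le_tsum 0
    fun e _ => mul_nonneg (hd e) (pow_nonneg hx0 e)
  simpa [hd0] using this

lemma exists_abs_log_localFactor_sub_le (k : ℕ) : ∃ K : ℝ, 0 ≤ K ∧ ∀ (d : ℕ → ℝ) (x : ℝ),
    (∀ e, 0 ≤ d e) → (∀ e, d e ≤ ((e : ℝ) + 1) ^ k) → d 0 = 1 → 0 ≤ x → x ≤ 1 / 2 →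
    |Real.log (∑' e, d e * x ^ e) - d 1 * x| ≤ K * x ^ 2 := by
  set M := ∑' e : ℕ, ((e : ℝ) + 1) ^ k * (1 / 2 : ℝ) ^ e with hM
  have hM0 : 0 ≤ M := tsum_nonneg fun e => by positivity
  refine ⟨4 * M + (2 * M) ^ 2, by positivity, fun d x hd hdk hd0 hx0 hx => ?_⟩
  have hs := summable_localFactor hd hdk hx0 hx
  have tail : ∀ j : ℕ, 0 ≤ (∑' e, d (e + j) * x ^ (e + j)) ∧
      (∑' e, d (e + j) * x ^ (e + j)) ≤ 2 ^ j * M * x ^ j := fun j => by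
    refine ⟨tsum_nonneg fun e => mul_nonneg (hd _) (pow_nonneg hx0 _), ?_⟩
    have s0 := summable_succ_pow_mul_half k
    have h1 : (∑' e : ℕ, (((e + j : ℕ) : ℝ) + 1) ^ k * (1 / 2 : ℝ) ^ (e + j)) ≤ M := by
      have h := s0.sum_add_tsum_nat_add j
      have h' : 0 ≤ ∑ e ∈ Finset.range j, ((e : ℝ) + 1) ^ k * (1 / 2 : ℝ) ^ e :=
        Finset.sum_nonneg fun e _ => by positivity
      linarith
    have s1 : Summable fun e : ℕ => (((e + j : ℕ) : ℝ) + 1) ^ k * (1 / 2 : ℝ) ^ (e + j) :=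
      (summable_nat_add_iff (f := fun e : ℕ => ((e : ℝ) + 1) ^ k * (1 / 2 : ℝ) ^ e) j).2 s0
    calc _ ≤ ∑' e : ℕ, 2 ^ j * x ^ j *
          ((((e + j : ℕ) : ℝ) + 1) ^ k * (1 / 2 : ℝ) ^ (e + j)) := by
          refine ((summable_nat_add_iff j).2 hs).tsum_le_tsum (fun e => ?_) (s1.mul_left _)
          calc d (e + j) * x ^ (e + j) ≤ (((e + j : ℕ) : ℝ) + 1) ^ k * ((1 / 2) ^ e * x ^ j) := by
                rw [pow_add]
                refine mul_le_mul (hdk _) ?_ (by positivity) (by positivity)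
                exact mul_le_mul_of_nonneg_right (pow_le_pow_left₀ hx0 hx e) (pow_nonneg hx0 j)
            _ = 2 ^ j * (1 / 2) ^ j * ((((e + j : ℕ) : ℝ) + 1) ^ k * ((1 / 2) ^ e * x ^ j)) := by
                rw [← mul_pow]; norm_num
            _ = _ := by rw [pow_add]; ring
      _ = 2 ^ j * x ^ j * (∑' e : ℕ, (((e + j : ℕ) : ℝ) + 1) ^ k * (1 / 2 : ℝ) ^ (e + j)) :=
          tsum_mul_left
      _ ≤ 2 ^ j * x ^ j * M := mul_le_mul_of_nonneg_left h1 (by positivity)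
      _ = _ := by ring
  have e1 := hs.sum_add_tsum_nat_add 1
  have e2 := hs.sum_add_tsum_nat_add 2
  simp only [Finset.sum_range_succ, Finset.sum_range_zero, hd0, pow_zero, pow_one] at e1 e2
  obtain ⟨a1, a2⟩ := tail 1
  obtain ⟨b1, b2⟩ := tail 2
  set u := ∑' e, d (e + 1) * x ^ (e + 1)
  set v := ∑' e, d (e + 2) * x ^ (e + 2)
  rw [show (∑' e, d e * x ^ e) = 1 + u by linarith]
  have huv : u = d 1 * x + v := by linarith
  have h1 : Real.log (1 + u) ≤ u := by
    have := Real.log_le_sub_one_of_pos (show 0 < 1 + u by linarith); linarith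
  have h2 : u - u ^ 2 ≤ Real.log (1 + u) := by
    refine le_trans ?_ (Real.one_sub_inv_le_log_of_pos (show 0 < 1 + u by linarith))
    have hpos : 0 < 1 + u := by linarith
    have : 1 - (1 + u)⁻¹ - (u - u ^ 2) = u ^ 3 / (1 + u) := by field_simp; ring
    have : 0 ≤ u ^ 3 / (1 + u) := by positivity
    linarith
  have h3 : u ^ 2 ≤ (2 * M) ^ 2 * x ^ 2 := by
    rw [← mul_pow]; exact pow_le_pow_left₀ a1 (by linarith) 2
  have h4 : 0 ≤ M * x ^ 2 := by positivity
  rw [abs_le]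
  constructor <;> nlinarith

end LocalFactor

lemma HasProd.hasSum_log {ι : Type*} {f : ι → ℝ} {a : ℝ} (h : HasProd f a) (hf : ∀ i, 0 < f i)
    (ha : 0 < a) : HasSum (fun i => Real.log (f i)) (Real.log a) := by
  refine ((Real.continuousAt_log ha.ne').tendsto.comp h).congr fun s => ?_
  exact Real.log_prod fun i _ => ne_of_gt (hf i)

/-- The logarithms of the local factors at `1` of an Euler product with a simple pole at `1` form
a log-Laplace system. -/
theorem isLogLaplace_eulerProduct {c : ℕ → ℝ} {k : ℕ} {ρ : ℝ} (hc : ∀ n, 0 ≤ c n) (hc1 : c 1 = 1)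
    (hmul : ∀ {m n : ℕ}, Nat.Coprime m n → c (m * n) = c m * c n)
    (hck : ∀ p e : ℕ, p.Prime → c (p ^ e) ≤ ((e : ℝ) + 1) ^ k)
    (hsum : ∀ s : ℝ, 1 < s → Summable fun n : ℕ => c n * (n : ℝ) ^ (-s)) (hρ : 0 < ρ)
    (hlim : Tendsto (fun s : ℝ => (s - 1) * ∑' n : ℕ, c n * (n : ℝ) ^ (-s))
      (nhdsWithin 1 (Set.Ioi 1)) (nhds ρ)) :
    IsLogLaplace
      (fun n => if n.Prime then Real.log (∑' e, c (n ^ e) * ((n : ℝ)⁻¹) ^ e) else 0)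
      (fun n => Real.log n) (Real.log ρ) := by
  obtain ⟨K, hK0, hK⟩ := exists_abs_log_localFactor_sub_le k
  set G : ℕ → ℝ → ℝ := fun p x => ∑' e, c (p ^ e) * x ^ e with hG
  have hGd : ∀ p : ℕ, ∀ e, 0 ≤ c (p ^ e) := fun p e => hc _
  have hG0 : ∀ p : ℕ, c (p ^ 0) = 1 := fun p => by rw [pow_zero, hc1]
  have hx : ∀ (p : ℕ) (δ : ℝ), p.Prime → 0 ≤ δ → 0 ≤ (p : ℝ) ^ (-(1 + δ)) ∧
      (p : ℝ) ^ (-(1 + δ)) ≤ (p : ℝ)⁻¹ ∧ (p : ℝ) ^ (-(1 + δ)) ≤ 1 / 2 := by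
    intro p δ hp hδ
    have hp2 : (2 : ℝ) ≤ p := by exact_mod_cast hp.two_le
    have h1 : (p : ℝ) ^ (-(1 + δ)) ≤ (p : ℝ)⁻¹ := by
      rw [← Real.rpow_neg_one]
      exact Real.rpow_le_rpow_of_exponent_le (by linarith) (by linarith)
    refine ⟨by positivity, h1, h1.trans ?_⟩
    rw [one_div]
    exact inv_anti₀ two_pos hp2
  have hx0 : ∀ p : ℕ, (p : ℝ) ^ (-(1 + 0 : ℝ)) = (p : ℝ)⁻¹ := fun p => by
    rw [add_zero, Real.rpow_neg_one]
  have hGpos : ∀ (p : ℕ) (δ : ℝ), p.Prime → 0 ≤ δ → 1 ≤ G p ((p : ℝ) ^ (-(1 + δ))) :=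
    fun p δ hp hδ => one_le_localFactor (hGd p) (fun e => hck p e hp) (hG0 p)
      (hx p δ hp hδ).1 (hx p δ hp hδ).2.2
  have hbound : ∀ (p : ℕ) (δ : ℝ), p.Prime → 0 ≤ δ →
      |Real.log (G p ((p : ℝ) ^ (-(1 + δ)))) - c p * (p : ℝ) ^ (-(1 + δ))| ≤
        K * ((p : ℝ) ^ 2)⁻¹ := by
    intro p δ hp hδ
    obtain ⟨h1, h2, h3⟩ := hx p δ hp hδ
    have := hK (fun e => c (p ^ e)) _ (hGd p) (fun e => hck p e hp) (hG0 p) h1 h3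
    simp only [pow_one] at this
    refine this.trans (mul_le_mul_of_nonneg_left ?_ hK0)
    rw [← inv_pow]
    exact pow_le_pow_left₀ h1 h2 2
  have heuler : ∀ δ : ℝ, 0 < δ → HasSum
      (fun n : ℕ => if n.Prime then Real.log (G n ((n : ℝ) ^ (-(1 + δ)))) else 0)
      (Real.log (∑' n : ℕ, c n * (n : ℝ) ^ (-(1 + δ)))) := by
    intro δ hδ
    have hs := hsum (1 + δ) (by linarith)
    have hnn : ∀ n : ℕ, 0 ≤ c n * (n : ℝ) ^ (-(1 + δ)) := fun n =>
      mul_nonneg (hc n) (by positivity)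
    have h := EulerProduct.eulerProduct_hasProd_mulIndicator
      (f := fun n : ℕ => c n * (n : ℝ) ^ (-(1 + δ))) (by simp [hc1])
      (fun {m n} hmn => by
        rw [hmul hmn, Nat.cast_mul, Real.mul_rpow (by positivity) (by positivity)]; ring)
      (hs.congr fun n => (Real.norm_of_nonneg (hnn n)).symm)
      (by rw [Nat.cast_zero, Real.zero_rpow (by linarith), mul_zero])
    have hF : (Set.mulIndicator {p | Nat.Prime p}
        fun p : ℕ => ∑' e, c (p ^ e) * ((p ^ e : ℕ) : ℝ) ^ (-(1 + δ))) =
        fun p : ℕ => if p.Prime then G p ((p : ℝ) ^ (-(1 + δ))) else 1 := by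
      ext p
      by_cases hp : p.Prime
      · rw [Set.mulIndicator_of_mem (by exact hp), if_pos hp]
        simp only [hG]
        congr 1 with e
        rw [Nat.cast_pow, ← Real.rpow_natCast, ← Real.rpow_mul (by positivity),
          ← Real.rpow_natCast, ← Real.rpow_mul (by positivity), mul_comm (e : ℝ)]
      · rw [Set.mulIndicator_of_notMem (by exact hp), if_neg hp]
    rw [hF] at h
    have hpos : 0 < ∑' n : ℕ, c n * (n : ℝ) ^ (-(1 + δ)) := by
      have := hs.le_tsum 1 fun n _ => hnn n
      simp only [hc1, Nat.cast_one, Real.one_rpow, mul_one] at this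
      linarith
    refine (h.hasSum_log (fun p => ?_) hpos).congr_fun ?_
    · split_ifs with hp
      · exact one_pos.trans_le (hGpos p δ hp hδ.le)
      · exact one_pos
    · intro p
      split_ifs <;> simp
  have hexp : ∀ (n : ℕ) (δ : ℝ), n.Prime → Real.exp (-(δ * Real.log n)) = (n : ℝ) ^ (-δ) := by
    intro n δ hn
    rw [Real.rpow_def_of_pos (by exact_mod_cast hn.pos)]
    congr 1; ring
  set A : ℕ → ℝ := fun n => if n.Prime then Real.log (G n ((n : ℝ)⁻¹)) else 0 with hA
  set E : ℝ → ℕ → ℝ := fun δ n => if n.Prime then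
    Real.log (G n ((n : ℝ)⁻¹)) * (n : ℝ) ^ (-δ) - Real.log (G n ((n : ℝ) ^ (-(1 + δ)))) else 0
    with hE
  have hsq : Summable fun n : ℕ => 2 * K * ((n : ℝ) ^ 2)⁻¹ :=
    (Real.summable_nat_pow_inv.2 one_lt_two).mul_left _
  have hEb : ∀ (δ : ℝ), 0 < δ → ∀ n, ‖E δ n‖ ≤ 2 * K * ((n : ℝ) ^ 2)⁻¹ := by
    intro δ hδ n
    simp only [hE]
    split_ifs with hn
    · have h1 := hbound n δ hn hδ.le
      have h2 := hbound n 0 hn le_rfl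
      rw [hx0] at h2
      have hn0 : (0 : ℝ) < n := by exact_mod_cast hn.pos
      have h3 : (n : ℝ) ^ (-(1 + δ)) = (n : ℝ)⁻¹ * (n : ℝ) ^ (-δ) := by
        rw [neg_add, Real.rpow_add hn0, Real.rpow_neg_one]
      have h4 : (n : ℝ) ^ (-δ) ≤ 1 :=
        Real.rpow_le_one_of_one_le_of_nonpos (by exact_mod_cast hn.one_le) (by linarith)
      have h5 : 0 ≤ (n : ℝ) ^ (-δ) := by positivity
      rw [Real.norm_eq_abs]
      calc _ = |(Real.log (G n ((n : ℝ)⁻¹)) - c n * (n : ℝ)⁻¹) * (n : ℝ) ^ (-δ) -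
            (Real.log (G n ((n : ℝ) ^ (-(1 + δ)))) - c n * (n : ℝ) ^ (-(1 + δ)))| := by
            congr 1; rw [h3]; ring
        _ ≤ |Real.log (G n ((n : ℝ)⁻¹)) - c n * (n : ℝ)⁻¹| * (n : ℝ) ^ (-δ) +
            |Real.log (G n ((n : ℝ) ^ (-(1 + δ)))) - c n * (n : ℝ) ^ (-(1 + δ))| := by
            refine (abs_sub _ _).trans_eq ?_
            rw [abs_mul, abs_of_nonneg h5]
        _ ≤ K * ((n : ℝ) ^ 2)⁻¹ * 1 + K * ((n : ℝ) ^ 2)⁻¹ := by gcongr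
        _ = _ := by ring
    · rw [norm_zero]; positivity
  have hEs : ∀ δ : ℝ, 0 < δ → Summable (E δ) := fun δ hδ => Summable.of_norm_bounded hsq (hEb δ hδ)
  have hdecomp : ∀ (δ : ℝ) (n : ℕ), A n * Real.exp (-(δ * Real.log n)) =
      E δ n + if n.Prime then Real.log (G n ((n : ℝ) ^ (-(1 + δ)))) else 0 := by
    intro δ n
    simp only [hA, hE]
    split_ifs with hn
    · rw [hexp n δ hn]; ring
    · simp
  have hsumm : ∀ δ : ℝ, 0 < δ → HasSum (fun n => A n * Real.exp (-(δ * Real.log n)))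
      ((∑' n, E δ n) + Real.log (∑' n : ℕ, c n * (n : ℝ) ^ (-(1 + δ)))) := fun δ hδ =>
    ((hEs δ hδ).hasSum.add (heuler δ hδ)).congr_fun (hdecomp δ)
  refine ⟨fun n => ?_, fun n => Real.log_natCast_nonneg n, fun δ hδ => (hsumm δ hδ).summable, ?_⟩
  · simp only [hA]
    split_ifs with hn
    · have := hGpos n 0 hn le_rfl
      rw [hx0] at this
      exact Real.log_nonneg this
    · exact le_rfl
  have hE0 : Tendsto (fun δ => ∑' n, E δ n) (nhdsWithin 0 (Set.Ioi 0)) (nhds (∑' _ : ℕ, (0 : ℝ))) := by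
    refine tendsto_tsum_of_dominated_convergence hsq (fun n => ?_) ?_
    · simp only [hE]
      by_cases hn : n.Prime
      · simp only [if_pos hn]
        have hn0 : (0 : ℝ) < n := by exact_mod_cast hn.pos
        have t1 : Tendsto (fun δ : ℝ => (n : ℝ) ^ (-δ)) (nhdsWithin 0 (Set.Ioi 0)) (nhds 1) := by
          have : Continuous fun δ : ℝ => (n : ℝ) ^ (-δ) :=
            Real.continuous_const_rpow hn0.ne' |>.comp continuous_neg
          simpa using (this.tendsto 0).mono_left nhdsWithin_le_nhds
        have t2 : Tendsto (fun δ : ℝ => (n : ℝ) ^ (-(1 + δ))) (nhdsWithin 0 (Set.Ioi 0))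
            (nhdsWithin (n : ℝ)⁻¹ (Set.Icc 0 (1 / 2))) := by
          refine tendsto_nhdsWithin_iff.2 ⟨?_, ?_⟩
          · have : Continuous fun δ : ℝ => (n : ℝ) ^ (-(1 + δ)) :=
              Real.continuous_const_rpow hn0.ne' |>.comp (by fun_prop)
            have := (this.tendsto 0).mono_left (nhdsWithin_le_nhds (s := Set.Ioi 0))
            rwa [hx0] at this
          · filter_upwards [self_mem_nhdsWithin] with δ hδ
            have := hx n δ hn (le_of_lt hδ)
            exact ⟨this.1, this.2.2⟩
        have hmem : (n : ℝ)⁻¹ ∈ Set.Icc (0 : ℝ) (1 / 2) := by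
          have := hx n 0 hn le_rfl
          rw [hx0] at this
          exact ⟨this.1, this.2.2⟩
        have t3 := (continuousOn_localFactor (hGd n) (fun e => hck n e hn) _ hmem).tendsto.comp t2
        have hne : G n ((n : ℝ)⁻¹) ≠ 0 := by
          have := hGpos n 0 hn le_rfl
          rw [hx0] at this
          linarith
        have t4 := (Real.continuousAt_log hne).tendsto.comp t3
        have t5 := (t1.const_mul (Real.log (G n ((n : ℝ)⁻¹)))).sub t4
        rw [mul_one, sub_self] at t5
        exact t5
      · simp only [if_neg hn]; exact tendsto_const_nhds
    · filter_upwards [self_mem_nhdsWithin] with δ hδ using hEb δ hδ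
  rw [tsum_zero] at hE0
  have hlog := (Real.continuousAt_log hρ.ne').tendsto.comp hlim
  have hshift : Tendsto (fun δ : ℝ => 1 + δ) (nhdsWithin 0 (Set.Ioi 0))
      (nhdsWithin 1 (Set.Ioi 1)) := by
    refine tendsto_nhdsWithin_iff.2 ⟨?_, ?_⟩
    · have : Continuous fun δ : ℝ => 1 + δ := by fun_prop
      simpa using (this.tendsto 0).mono_left nhdsWithin_le_nhds
    · filter_upwards [self_mem_nhdsWithin] with δ hδ
      exact lt_add_of_pos_right 1 (Set.mem_Ioi.1 hδ)
  have hfin := hE0.add (hlog.comp hshift)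
  rw [zero_add] at hfin
  refine hfin.congr' ?_
  filter_upwards [self_mem_nhdsWithin] with δ hδ
  have hδ : 0 < δ := hδ
  rw [(hsumm δ hδ).tsum_eq]
  have hpos : (∑' n : ℕ, c n * (n : ℝ) ^ (-(1 + δ))) ≠ 0 := by
    have := (hsum (1 + δ) (by linarith)).le_tsum 1 fun n _ => mul_nonneg (hc n) (by positivity)
    simp only [hc1, Nat.cast_one, Real.one_rpow, mul_one] at this
    linarith
  simp only [Function.comp, add_sub_cancel_left]
  rw [Real.log_mul hδ.ne' hpos]
  ring

section IdealCount

variable (K : Type*) [Field K] [NumberField K]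

open NumberField Ideal UniqueFactorizationMonoid

/-- The number of ideals of norm `n` in the ring of integers of `K`. -/
noncomputable def idealCount (n : ℕ) : ℕ :=
  Nat.card {I : Ideal (𝓞 K) // absNorm I = n}

theorem idealCount_one : idealCount K 1 = 1 := by
  have : Unique {I : Ideal (𝓞 K) // absNorm I = 1} :=
    ⟨⟨⟨⊤, absNorm_top⟩⟩, fun I => Subtype.ext (absNorm_eq_one_iff.1 I.2)⟩
  exact Nat.card_unique

variable {K}

theorem Ideal.natCast_mem_of_absNorm_dvd {I : Ideal (𝓞 K)} {n : ℕ} (h : absNorm I ∣ n) :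
    (n : 𝓞 K) ∈ I := by
  obtain ⟨k, rfl⟩ := h
  rw [Nat.cast_mul]
  exact I.mul_mem_right _ (absNorm_mem I)

theorem Ideal.absNorm_dvd_pow_of_natCast_mem {I : Ideal (𝓞 K)} {n : ℕ} (h : (n : 𝓞 K) ∈ I) :
    absNorm I ∣ n ^ Module.finrank ℤ (𝓞 K) := by
  rw [← absNorm_span_natCast]
  exact absNorm_dvd_absNorm_of_le ((span_singleton_le_iff_mem I).2 h)

theorem Ideal.isCoprime_of_natCast_mem {I J : Ideal (𝓞 K)} {m n : ℕ} (hmn : m.Coprime n)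
    (hI : (m : 𝓞 K) ∈ I) (hJ : (n : 𝓞 K) ∈ J) : IsCoprime I J := by
  rw [isCoprime_iff_exists]
  obtain ⟨u, v, huv⟩ := Nat.isCoprime_iff_coprime.2 hmn
  refine ⟨u * m, I.mul_mem_left _ hI, v * n, J.mul_mem_left _ hJ, ?_⟩
  exact_mod_cast congrArg (Int.cast : ℤ → 𝓞 K) huv

variable (K)

theorem idealCount_mul {m n : ℕ} (hmn : m.Coprime n) :
    idealCount K (m * n) = idealCount K m * idealCount K n := by
  unfold idealCount
  rw [← Nat.card_prod]
  refine (Nat.card_congr (Equiv.ofBijective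
    (fun P : {I : Ideal (𝓞 K) // absNorm I = m} × {I : Ideal (𝓞 K) // absNorm I = n} =>
      (⟨P.1.1 * P.2.1, by rw [map_mul, P.1.2, P.2.2]⟩ :
        {I : Ideal (𝓞 K) // absNorm I = m * n})) ⟨?_, ?_⟩)).symm
  · rintro ⟨⟨I, hI⟩, J, hJ⟩ ⟨⟨I', hI'⟩, J', hJ'⟩ h
    have h : I * J = I' * J' := congrArg Subtype.val h
    have mem : ∀ {A : Ideal (𝓞 K)} {k : ℕ}, absNorm A = k → (k : 𝓞 K) ∈ A := fun hA =>
      natCast_mem_of_absNorm_dvd hA.dvd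
    have hc := isCoprime_of_natCast_mem hmn (mem hI) (mem hJ')
    have hc' := isCoprime_of_natCast_mem hmn (mem hI') (mem hJ)
    have e1 : I = I' := dvd_antisymm (hc.dvd_of_dvd_mul_right (h ▸ dvd_mul_right I J))
      (hc'.dvd_of_dvd_mul_right (h ▸ dvd_mul_right I' J'))
    have e2 : J = J' := dvd_antisymm (hc'.symm.dvd_of_dvd_mul_left (h ▸ dvd_mul_left J I))
      (hc.symm.dvd_of_dvd_mul_left (h ▸ dvd_mul_left J' I'))
    subst e1 e2
    rfl
  · rintro ⟨I, hI⟩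
    have hm : (m : 𝓞 K) ∈ I ⊔ span {(m : 𝓞 K)} :=
      mem_sup_right (mem_span_singleton_self _)
    have hn : (n : 𝓞 K) ∈ I ⊔ span {(n : 𝓞 K)} :=
      mem_sup_right (mem_span_singleton_self _)
    have hmul : (I ⊔ span {(m : 𝓞 K)}) * (I ⊔ span {(n : 𝓞 K)}) = I := by
      refine le_antisymm ?_ ?_
      · rw [Ideal.sup_mul]
        refine sup_le Ideal.mul_le_left ?_
        rw [Ideal.mul_sup, span_singleton_mul_span_singleton]
        refine sup_le Ideal.mul_le_right ?_
        rw [span_singleton_le_iff_mem, ← Nat.cast_mul]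
        exact natCast_mem_of_absNorm_dvd hI.dvd
      · rw [Ideal.mul_eq_inf_of_isCoprime (isCoprime_of_natCast_mem hmn hm hn)]
        exact le_inf le_sup_left le_sup_left
    have hN : absNorm (I ⊔ span {(m : 𝓞 K)}) * absNorm (I ⊔ span {(n : 𝓞 K)}) = m * n := by
      rw [← map_mul, hmul, hI]
    have hcm := (hmn.pow_left _).coprime_dvd_left (absNorm_dvd_pow_of_natCast_mem hm)
    have hcn := (hmn.pow_right _).coprime_dvd_right (absNorm_dvd_pow_of_natCast_mem hn)
    refine ⟨⟨⟨_, dvd_antisymm (hcm.dvd_of_dvd_mul_right (hN ▸ dvd_mul_right _ _))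
      (hcn.dvd_of_dvd_mul_right (hN ▸ dvd_mul_right _ _))⟩,
      ⟨_, dvd_antisymm (hcn.symm.dvd_of_dvd_mul_left (hN ▸ dvd_mul_left _ _))
      (hcm.symm.dvd_of_dvd_mul_left (hN ▸ dvd_mul_left _ _))⟩⟩, Subtype.ext hmul⟩

variable {K}

theorem Ideal.dvd_absNorm_of_natCast_mem {P : Ideal (𝓞 K)} (hP : P ≠ ⊤) {p : ℕ} (hp : p.Prime)
    (h : (p : 𝓞 K) ∈ P) : p ∣ absNorm P := by
  obtain ⟨k, -, hk⟩ := (Nat.dvd_prime_pow hp).1 (absNorm_dvd_pow_of_natCast_mem h)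
  rw [hk]
  refine dvd_pow_self _ ?_
  rintro rfl
  exact hP (absNorm_eq_one_iff.1 (by simpa using hk))

theorem Ideal.card_normalizedFactors_span_natCast_le {p : ℕ} (hp : p.Prime) :
    (normalizedFactors (span {(p : 𝓞 K)})).card ≤ Module.finrank ℤ (𝓞 K) := by
  have hp0 : span {(p : 𝓞 K)} ≠ ⊥ := by
    simpa [span_singleton_eq_bot] using hp.ne_zero
  have h1 : ((normalizedFactors (span {(p : 𝓞 K)})).map absNorm).prod =
      p ^ Module.finrank ℤ (𝓞 K) := by
    rw [← absNorm_span_natCast, ← map_multiset_prod, Ideal.prod_normalizedFactors_eq_self hp0]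
  have h2 : p ^ (normalizedFactors (span {(p : 𝓞 K)})).card ∣
      ((normalizedFactors (span {(p : 𝓞 K)})).map absNorm).prod := by
    rw [← Multiset.prod_replicate, ← Multiset.map_const']
    refine Multiset.prod_dvd_prod_of_dvd _ _ fun P hP => ?_
    have hPp := prime_of_normalized_factor P hP
    exact dvd_absNorm_of_natCast_mem (isPrime_of_prime hPp).ne_top hp
      ((dvd_span_singleton).1 (dvd_of_mem_normalizedFactors hP))
  rw [h1] at h2
  exact (Nat.pow_dvd_pow_iff_le_right hp.one_lt).1 h2

variable (K)

theorem idealCount_prime_pow_le {p : ℕ} (hp : p.Prime) (e : ℕ) :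
    idealCount K (p ^ e) ≤ (e + 1) ^ Module.finrank ℤ (𝓞 K) := by
  classical
  set T := (normalizedFactors (span {(p : 𝓞 K)})).toFinset with hT
  have hp0 : span {(p : 𝓞 K)} ≠ ⊥ := by
    simpa [span_singleton_eq_bot] using hp.ne_zero
  have key : ∀ I : Ideal (𝓞 K), absNorm I = p ^ e → ∀ P ∈ normalizedFactors I, P ∈ T := by
    intro I hI P hP
    have hPp := prime_of_normalized_factor P hP
    have h1 : ((p ^ e : ℕ) : 𝓞 K) ∈ P :=
      (dvd_iff_le.1 (dvd_of_mem_normalizedFactors hP)) (natCast_mem_of_absNorm_dvd hI.dvd)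
    rw [Nat.cast_pow] at h1
    have h2 := (isPrime_of_prime hPp).mem_of_pow_mem _ h1
    rw [hT, Multiset.mem_toFinset, Ideal.mem_normalizedFactors_iff hp0]
    exact ⟨isPrime_of_prime hPp, (span_singleton_le_iff_mem P).2 h2⟩
  have hcount : ∀ I : Ideal (𝓞 K), absNorm I = p ^ e → ∀ P ∈ T,
      (normalizedFactors I).count P ≤ e := by
    intro I hI P hP
    rw [hT, Multiset.mem_toFinset] at hP
    have hPp := prime_of_normalized_factor P hP
    have hI0 : I ≠ ⊥ := by
      rintro rfl
      rw [absNorm_bot] at hI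
      exact (pow_pos hp.pos e).ne hI
    have h1 : P ^ (normalizedFactors I).count P ∣ I := by
      rw [← Multiset.prod_replicate]
      conv_rhs => rw [← Ideal.prod_normalizedFactors_eq_self hI0]
      exact Multiset.prod_dvd_prod_of_le (Multiset.le_count_iff_replicate_le.1 le_rfl)
    have h2 := map_dvd absNorm h1
    rw [map_pow, hI] at h2
    have h3 : p ∣ absNorm P := dvd_absNorm_of_natCast_mem (isPrime_of_prime hPp).ne_top hp
      ((dvd_span_singleton).1 (dvd_of_mem_normalizedFactors hP))
    exact (Nat.pow_dvd_pow_iff_le_right hp.one_lt).1 ((pow_dvd_pow_of_dvd h3 _).trans h2)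
  have hinj : Function.Injective (fun (I : {I : Ideal (𝓞 K) // absNorm I = p ^ e}) (P : T) =>
      (⟨(normalizedFactors I.1).count P.1, Nat.lt_succ_of_le (hcount I.1 I.2 P.1 P.2)⟩ :
        Fin (e + 1))) := by
    rintro ⟨I, hI⟩ ⟨J, hJ⟩ h
    have hne : ∀ A : Ideal (𝓞 K), absNorm A = p ^ e → A ≠ ⊥ := by
      rintro _ hA rfl
      rw [absNorm_bot] at hA
      exact (pow_pos hp.pos e).ne hA
    have hIJ : normalizedFactors I = normalizedFactors J := by
      ext P
      by_cases hP : P ∈ T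
      · simpa using congrFun h ⟨P, hP⟩
      · rw [Multiset.count_eq_zero_of_notMem fun h => hP (key I hI P h),
          Multiset.count_eq_zero_of_notMem fun h => hP (key J hJ P h)]
    refine Subtype.ext (?_ : I = J)
    rw [← Ideal.prod_normalizedFactors_eq_self (hne I hI), hIJ,
      Ideal.prod_normalizedFactors_eq_self (hne J hJ)]
  refine (Nat.card_le_card_of_injective _ hinj).trans ?_
  rw [Nat.card_fun, Nat.card_eq_fintype_card, Nat.card_eq_fintype_card, Fintype.card_fin,
    Fintype.card_coe]
  exact Nat.pow_le_pow_right (by lia)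
    ((Multiset.toFinset_card_le _).trans (card_normalizedFactors_span_natCast_le hp))

open nonZeroDivisors in
theorem sum_idealCount (n : ℕ) :
    ∑ k ∈ Finset.Icc 1 n, idealCount K k =
      Nat.card {I : (Ideal (𝓞 K))⁰ // absNorm (I : Ideal (𝓞 K)) ≤ n} := by
  unfold idealCount
  rw [← add_left_inj 1, ← card_norm_le_eq_card_norm_le_add_one,
    show Finset.Icc 1 n = Finset.Ioc 0 n from Finset.Icc_succ_left_eq_Ioc _ _,
    show 1 = Nat.card {I : Ideal (𝓞 K) // absNorm I = 0} by simp [Ideal.absNorm_eq_zero_iff],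
    Finset.sum_Ioc_add_eq_sum_Icc (n.zero_le),
    ← Finset.card_preimage_eq_sum_card_image_eq (fun k _ ↦ finite_setOfPred_absNorm_eq k)]
  simp [Set.coe_eq_subtype]

theorem lSeriesSummable_idealCount {s : ℝ} (hs : 1 < s) :
    LSeriesSummable (fun n => ((idealCount K n : ℝ) : ℂ)) s := by
  refine LSeriesSummable_of_sum_norm_bigO_and_nonneg (r := 1) ?_ (fun _ => Nat.cast_nonneg _)
    zero_le_one (by simpa using hs)
  have h := ((Ideal.tendsto_norm_le_div_atTop₀ K).comp tendsto_natCast_atTop_atTop).isBigO_one ℝ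
  refine (h.mul (Asymptotics.isBigO_refl (fun n : ℕ => (n : ℝ)) atTop)).congr' ?_ ?_
  · filter_upwards [eventually_ne_atTop 0] with n hn
    simp only [Function.comp_apply, Nat.cast_le]
    rw [← sum_idealCount, div_mul_cancel₀ _ (Nat.cast_ne_zero.2 hn), Nat.cast_sum]
  · exact Eventually.of_forall fun n => by simp

theorem term_idealCount {s : ℝ} (hs : 1 < s) (n : ℕ) :
    LSeries.term (fun n => ((idealCount K n : ℝ) : ℂ)) s n =
      ((idealCount K n * (n : ℝ) ^ (-s) : ℝ) : ℂ) := by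
  rcases eq_or_ne n 0 with rfl | hn
  · rw [LSeries.term_zero, Nat.cast_zero, Real.zero_rpow (by linarith), mul_zero,
      Complex.ofReal_zero]
  · rw [LSeries.term_of_ne_zero hn, Complex.ofReal_mul, Complex.ofReal_cpow (by positivity),
      Complex.ofReal_neg, Complex.cpow_neg, div_eq_mul_inv]
    simp

theorem summable_idealCount {s : ℝ} (hs : 1 < s) :
    Summable fun n : ℕ => (idealCount K n : ℝ) * (n : ℝ) ^ (-s) := by
  have h := lSeriesSummable_idealCount K hs
  unfold LSeriesSummable at h
  rw [funext (term_idealCount K hs)] at h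
  exact Complex.summable_ofReal.1 h

theorem tendsto_sub_one_mul_tsum_idealCount :
    Tendsto (fun s : ℝ => (s - 1) * ∑' n : ℕ, (idealCount K n : ℝ) * (n : ℝ) ^ (-s))
      (nhdsWithin 1 (Set.Ioi 1)) (nhds (dedekindZeta_residue K)) := by
  have h := (Complex.continuous_re.tendsto _).comp (tendsto_sub_one_mul_dedekindZeta_nhdsGT K)
  rw [Complex.ofReal_re] at h
  refine h.congr' ?_
  filter_upwards [self_mem_nhdsWithin] with s hs
  have : dedekindZeta K s = ((∑' n : ℕ, (idealCount K n : ℝ) * (n : ℝ) ^ (-s) : ℝ) : ℂ) := by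
    rw [Complex.ofReal_tsum, ← tsum_congr (term_idealCount K hs)]
    rfl
  rw [Function.comp_apply, this, ← Complex.ofReal_one, ← Complex.ofReal_sub,
    ← Complex.ofReal_mul, Complex.ofReal_re]

theorem idealCount_prime (p : ℕ) [hp : Fact p.Prime] :
    idealCount K p = Nat.card (𝓞 K →+* ZMod p) := by
  unfold idealCount
  have hker : ∀ φ : 𝓞 K →+* ZMod p, absNorm (RingHom.ker φ) = p := fun φ => by
    rw [absNorm_apply, Submodule.cardQuot_apply]
    exact (Nat.card_congr (RingHom.quotientKerEquivOfSurjective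
      (ZMod.ringHom_surjective φ)).toEquiv).trans (Nat.card_zmod p)
  refine (Nat.card_congr (Equiv.ofBijective (fun φ : 𝓞 K →+* ZMod p =>
    (⟨RingHom.ker φ, hker φ⟩ : {I : Ideal (𝓞 K) // absNorm I = p})) ⟨?_, ?_⟩)).symm
  · exact fun φ ψ h => ZMod.ringHom_eq_of_ker_eq φ ψ (congrArg Subtype.val h)
  · rintro ⟨I, hI⟩
    have hcard : Nat.card (𝓞 K ⧸ I) = p := hI
    have : Finite (𝓞 K ⧸ I) := Nat.finite_of_card_ne_zero (hcard ▸ hp.out.ne_zero)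
    have := Fintype.ofFinite (𝓞 K ⧸ I)
    rw [Nat.card_eq_fintype_card] at hcard
    refine ⟨((ZMod.ringEquivOfPrime _ hp.out hcard).symm : _ →+* ZMod p).comp
      (Ideal.Quotient.mk I), Subtype.ext ?_⟩
    ext x
    simp [RingHom.mem_ker, Ideal.Quotient.eq_zero_iff_mem]

variable {K} in
theorem card_ringHom_zmod_eq_card_roots {θ : 𝓞 K} {p : ℕ} [hp : Fact p.Prime]
    (h : ¬ p ∣ RingOfIntegers.exponent θ) :
    Nat.card (𝓞 K →+* ZMod p) =
      Nat.card {r : ZMod p // (minpoly ℤ θ).eval₂ (Int.castRingHom (ZMod p)) r = 0} := by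
  have hev : ∀ (φ : 𝓞 K →+* ZMod p) (Q : ℤ[X]),
      φ (aeval θ Q) = Q.eval₂ (Int.castRingHom (ZMod p)) (φ θ) := fun φ Q => by
    rw [aeval_def, hom_eval₂]
    congr 1
    exact RingHom.ext_int _ _
  refine Nat.card_congr (Equiv.ofBijective (fun φ : 𝓞 K →+* ZMod p =>
    (⟨φ θ, by rw [← hev, minpoly.aeval, map_zero]⟩ :
      {r : ZMod p // (minpoly ℤ θ).eval₂ (Int.castRingHom (ZMod p)) r = 0})) ⟨?_, ?_⟩)
  · intro φ ψ hφψ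
    have hθ : φ θ = ψ θ := congrArg Subtype.val hφψ
    ext x
    obtain ⟨y, hy⟩ := (RingOfIntegers.ZModXQuotSpanEquivQuotSpan h).surjective
      (Ideal.Quotient.mk _ x)
    obtain ⟨Q, rfl⟩ := Ideal.Quotient.mk_surjective y
    obtain ⟨Q, rfl⟩ := Polynomial.map_surjective (Int.castRingHom (ZMod p))
      (ZMod.ringHom_surjective _) Q
    rw [RingOfIntegers.ZModXQuotSpanEquivQuotSpan_mk_apply, Ideal.Quotient.eq,
      mem_span_singleton] at hy
    obtain ⟨z, hz⟩ := hy
    have hval : ∀ χ : 𝓞 K →+* ZMod p, χ x = Q.eval₂ (Int.castRingHom (ZMod p)) (χ θ) := by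
      intro χ
      have := congrArg χ hz
      rw [map_sub, map_mul, map_natCast, CharP.cast_eq_zero, zero_mul, hev] at this
      exact (sub_eq_zero.1 this).symm
    rw [hval, hval, hθ]
  · rintro ⟨r, hr⟩
    let ev : (ZMod p)[X] ⧸ span {map (Int.castRingHom (ZMod p)) (minpoly ℤ θ)} →+* ZMod p :=
      Ideal.Quotient.lift _ (evalRingHom r) fun a ha => by
        obtain ⟨b, rfl⟩ := mem_span_singleton.1 ha
        rw [map_mul, coe_evalRingHom, eval_map, hr, zero_mul]
    refine ⟨(ev.comp (RingOfIntegers.ZModXQuotSpanEquivQuotSpan h).symm.toRingHom).comp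
      (Ideal.Quotient.mk _), Subtype.ext ?_⟩
    have := RingOfIntegers.ZModXQuotSpanEquivQuotSpan_mk_apply h X
    rw [aeval_X, map_X, ← RingEquiv.eq_symm_apply] at this
    change ev ((RingOfIntegers.ZModXQuotSpanEquivQuotSpan h).symm _) = r
    rw [← this]
    simp [ev]

variable {K} in
theorem exponent_ne_zero_of_adjoin_eq_top {θ : 𝓞 K} (h : Algebra.adjoin ℚ {(θ : K)} = ⊤) :
    RingOfIntegers.exponent θ ≠ 0 := by
  have hmul := conductor_mul_differentIdeal ℤ ℚ K θ h
  have hd : aeval θ (derivative (minpoly ℤ θ)) ≠ 0 := by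
    intro h0
    have h1 : aeval (θ : K) (derivative (minpoly ℚ (θ : K))) ≠ 0 :=
      Separable.aeval_derivative_ne_zero (Algebra.IsSeparable.isSeparable ℚ (θ : K))
        (minpoly.aeval ℚ (θ : K))
    rw [minpoly.isIntegrallyClosed_eq_field_fractions ℚ K
      (RingOfIntegers.isIntegral θ), derivative_map, aeval_map_algebraMap,
      aeval_algebraMap_apply, h0, map_zero] at h1
    exact h1 rfl
  have hc : conductor ℤ θ ≠ ⊥ := by
    intro h0
    rw [h0, Ideal.bot_mul, eq_comm, span_singleton_eq_bot] at hmul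
    exact hd hmul
  unfold RingOfIntegers.exponent
  rw [Ne, absNorm_eq_zero_iff]
  exact fun h0 => hc (eq_bot_of_comap_eq_bot h0)

end IdealCount

open NumberField in
theorem exists_ringOfIntegers_minpoly_eq {K : Type*} [Field K] [NumberField K] {f : ℤ[X]}
    (hdeg : 1 ≤ f.natDegree) {x : K} (hx : f.eval₂ (algebraMap ℤ K) x = 0)
    (htop : Algebra.adjoin ℚ {x} = ⊤) (hrank : Module.finrank ℚ K = f.natDegree) :
    ∃ θ : 𝓞 K, Algebra.adjoin ℚ {(θ : K)} = ⊤ ∧ minpoly ℤ θ = f.integralNormalization := by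
  have hf0 : f ≠ 0 := by
    rintro rfl
    simp at hdeg
  have hmonic := monic_integralNormalization hf0
  have hα : f.integralNormalization.eval₂ (algebraMap ℤ K)
      (algebraMap ℤ K f.leadingCoeff * x) = 0 := by
    rw [integralNormalization_eval₂_leadingCoeff_mul hdeg, hx, mul_zero]
  let θ : 𝓞 K := ⟨algebraMap ℤ K f.leadingCoeff * x, f.integralNormalization, hmonic, hα⟩
  have hθ : (θ : K) = (f.leadingCoeff : ℚ) • x := by
    rw [Algebra.smul_def, map_intCast, ← eq_intCast (algebraMap ℤ K)]
    rfl
  have hθtop : Algebra.adjoin ℚ {(θ : K)} = ⊤ := by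
    rw [eq_top_iff, ← htop, Algebra.adjoin_le_iff, Set.singleton_subset_iff]
    have hm := (Algebra.adjoin ℚ {(θ : K)}).smul_mem (Algebra.self_mem_adjoin_singleton ℚ (θ : K))
      ((f.leadingCoeff : ℚ)⁻¹)
    have hlc : (f.leadingCoeff : ℚ) ≠ 0 := Int.cast_ne_zero.2 (leadingCoeff_ne_zero.2 hf0)
    have he : (f.leadingCoeff : ℚ)⁻¹ • (θ : K) = x := by
      rw [hθ, smul_smul, inv_mul_cancel₀ hlc, one_smul]
    rwa [he] at hm
  refine ⟨θ, hθtop, ?_⟩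
  have hint := RingOfIntegers.isIntegral θ
  refine (eq_of_monic_of_dvd_of_natDegree_le (minpoly.monic hint) hmonic
    (minpoly.isIntegrallyClosed_dvd hint ?_) ?_).symm
  · apply RingOfIntegers.coe_injective
    rw [map_zero, ← aeval_algebraMap_apply]
    exact hα
  · rw [natDegree_integralNormalization, ← hrank]
    have h1 : IntermediateField.adjoin ℚ {(θ : K)} = ⊤ := by
      rw [← IntermediateField.toSubalgebra_inj,
        IntermediateField.adjoin_simple_toSubalgebra_of_isAlgebraic
          (Algebra.IsAlgebraic.isAlgebraic _), hθtop]
      rfl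
    rw [← (Field.primitive_element_iff_minpoly_natDegree_eq ℚ (θ : K)).1 h1,
      minpoly.isIntegrallyClosed_eq_field_fractions ℚ K hint, (minpoly.monic hint).natDegree_map]

/-- An irreducible integral polynomial has a root generating a number field of the same degree. -/
theorem exists_numberField_root {f : ℤ[X]} (hirr : Irreducible f) (hdeg : 1 ≤ f.natDegree) :
    ∃ (K : Type) (_ : Field K) (_ : NumberField K) (x : K), f.eval₂ (algebraMap ℤ K) x = 0 ∧
      Algebra.adjoin ℚ {x} = ⊤ ∧ Module.finrank ℚ K = f.natDegree := by
  have hprim : f.IsPrimitive := hirr.isPrimitive (by lia)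
  have hirr' : Irreducible (f.map (algebraMap ℤ ℚ)) :=
    (hprim.irreducible_iff_irreducible_map_fraction_map).1 hirr
  have hfact : Fact (Irreducible (f.map (algebraMap ℤ ℚ))) := ⟨hirr'⟩
  let pb := AdjoinRoot.powerBasis hirr'.ne_zero
  have hfin : FiniteDimensional ℚ (AdjoinRoot (f.map (algebraMap ℤ ℚ))) := pb.finite
  have hchar : CharZero (AdjoinRoot (f.map (algebraMap ℤ ℚ))) :=
    charZero_of_injective_algebraMap
      (algebraMap ℚ (AdjoinRoot (f.map (algebraMap ℤ ℚ)))).injective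
  refine ⟨AdjoinRoot (f.map (algebraMap ℤ ℚ)), inferInstance, ⟨⟩, AdjoinRoot.root _, ?_,
    AdjoinRoot.adjoinRoot_eq_top, ?_⟩
  · have h := AdjoinRoot.eval₂_root (f.map (algebraMap ℤ ℚ))
    rw [eval₂_map] at h
    exact (congrArg (fun g : ℤ →+* AdjoinRoot (f.map (algebraMap ℤ ℚ)) => f.eval₂ g
      (AdjoinRoot.root (f.map (algebraMap ℤ ℚ)))) (RingHom.ext_int _ _)).trans h
  · rw [pb.finrank, AdjoinRoot.powerBasis_dim,
      natDegree_map_eq_of_injective (algebraMap ℤ ℚ).injective_int]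

section Roots

variable {f : ℤ[X]} {p : ℕ}

theorem card_roots_integralNormalization (hdeg : 1 ≤ f.natDegree) [Fact p.Prime]
    (hp : ¬ (p : ℤ) ∣ f.leadingCoeff) :
    Nat.card {r : ZMod p // f.integralNormalization.eval₂ (Int.castRingHom (ZMod p)) r = 0} =
      Nat.card {r : ZMod p // f.eval₂ (Int.castRingHom (ZMod p)) r = 0} := by
  have hu : Int.castRingHom (ZMod p) f.leadingCoeff ≠ 0 := by
    rwa [eq_intCast, Ne, ZMod.intCast_zmod_eq_zero_iff_dvd]
  refine (Nat.card_congr ((Equiv.mulLeft₀ _ hu).subtypeEquiv fun r => ?_)).symm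
  rw [Equiv.mulLeft₀_apply, integralNormalization_eval₂_leadingCoeff_mul hdeg]
  rw [mul_eq_zero, or_iff_right (pow_ne_zero _ hu)]

theorem intCast_eval_eq (f : ℤ[X]) (p : ℕ) (a : ℤ) :
    ((f.eval a : ℤ) : ZMod p) = f.eval₂ (Int.castRingHom (ZMod p)) (a : ZMod p) := by
  rw [← eq_intCast (Int.castRingHom (ZMod p)), ← eval₂_at_apply]
  simp

theorem card_roots_eq_nu1 [hp : Fact p.Prime] (h0 : ¬ (p : ℤ) ∣ f.coeff 0) :
    Nat.card {r : ZMod p // f.eval₂ (Int.castRingHom (ZMod p)) r = 0} = nu1 f p := by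
  have hiff : ∀ a : ℕ, (p : ℤ) ∣ f.eval (a : ℤ) ↔
      f.eval₂ (Int.castRingHom (ZMod p)) (a : ZMod p) = 0 := fun a => by
    rw [← ZMod.intCast_zmod_eq_zero_iff_dvd, intCast_eval_eq, Int.cast_natCast]
  have hcop : ∀ a : ℕ, (p : ℤ) ∣ f.eval (a : ℤ) → Nat.gcd a p = 1 := by
    intro a ha
    refine Nat.Coprime.symm ((hp.out.coprime_iff_not_dvd).2 fun hpa => h0 ?_)
    have h1 : ((a : ℤ) - 0) ∣ f.eval (a : ℤ) - f.eval 0 := sub_dvd_eval_sub _ _ _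
    rw [sub_zero] at h1
    rw [coeff_zero_eq_eval_zero]
    exact (dvd_sub_right ha).1 ((Int.natCast_dvd_natCast.2 hpa).trans h1)
  classical
  rw [Nat.card_eq_fintype_card, Fintype.card_subtype]
  unfold nu1
  refine Finset.card_nbij' ZMod.val (fun a => (a : ZMod p)) ?_ ?_ ?_ ?_
  · intro r hr
    have hr : f.eval₂ (Int.castRingHom (ZMod p)) r = 0 := by simpa using hr
    have : (p : ℤ) ∣ f.eval (r.val : ℤ) := by rwa [hiff, ZMod.natCast_zmod_val]
    rw [Finset.mem_coe, Finset.mem_filter, Finset.mem_range]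
    exact ⟨ZMod.val_lt r, hcop _ this, this⟩
  · intro a ha
    have ha : a < p ∧ Nat.gcd a p = 1 ∧ (p : ℤ) ∣ f.eval (a : ℤ) := by simpa using ha
    simpa using (hiff a).1 ha.2.2
  · intro r _
    exact ZMod.natCast_zmod_val r
  · intro a ha
    have ha : a < p ∧ Nat.gcd a p = 1 ∧ (p : ℤ) ∣ f.eval (a : ℤ) := by simpa using ha
    exact ZMod.val_cast_of_lt ha.1

end Roots

theorem idealCount_prime_eq_nu1 {K : Type*} [Field K] [NumberField K] {f : ℤ[X]}
    (hdeg : 1 ≤ f.natDegree) (hconst : f.coeff 0 ≠ 0) {θ : NumberField.RingOfIntegers K}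
    (htop : Algebra.adjoin ℚ {(θ : K)} = ⊤) (hθ : minpoly ℤ θ = f.integralNormalization) :
    ∃ N : ℕ, ∀ p, p.Prime → N ≤ p → idealCount K p = nu1 f p := by
  have hlc : f.leadingCoeff ≠ 0 := leadingCoeff_ne_zero.2 fun h => by simp [h] at hconst
  refine ⟨RingOfIntegers.exponent θ + f.leadingCoeff.natAbs + (f.coeff 0).natAbs + 1,
    fun p hp hN => ?_⟩
  have : Fact p.Prime := ⟨hp⟩
  have hz : ∀ a : ℤ, a ≠ 0 → a.natAbs < p → ¬ (p : ℤ) ∣ a := fun a ha hap h =>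
    hap.not_ge (Nat.le_of_dvd (Int.natAbs_pos.2 ha) (Int.natCast_dvd.1 h))
  rw [idealCount_prime, card_ringHom_zmod_eq_card_roots (θ := θ), hθ,
    card_roots_integralNormalization hdeg (hz _ hlc (by lia)),
    card_roots_eq_nu1 (hz _ hconst (by lia))]
  intro h
  have := Nat.le_of_dvd (Nat.pos_of_ne_zero (exponent_ne_zero_of_adjoin_eq_top htop)) h
  lia

section PrimeProducts

theorem IsLogLaplace.tendsto_sum_primes {g : ℕ → ℝ} {C : ℝ}
    (h : IsLogLaplace (fun n => if n.Prime then g n else 0) (fun n => Real.log n) C) :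
    Tendsto (fun x : ℝ => (∑ p ∈ (Finset.range (⌊x⌋₊ + 1)).filter Nat.Prime, g p) -
      Real.log (Real.log x)) atTop (nhds (C + Real.eulerMascheroniConstant)) := by
  refine (h.tendsto_sum_sub_log.comp Real.tendsto_log_atTop).congr' ?_
  filter_upwards [eventually_gt_atTop 0] with x hx
  simp only [Function.comp_apply]
  congr 1
  rw [Finset.sum_filter, tsum_eq_sum (s := Finset.range (⌊x⌋₊ + 1))]
  · refine Finset.sum_congr rfl fun n hn => ?_
    by_cases hp : n.Prime
    · have : (n : ℝ) ≤ x := (Nat.le_floor_iff hx.le).1 (by simpa [Nat.lt_succ_iff] using hn)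
      rw [if_pos (Real.log_le_log (Nat.cast_pos.2 hp.pos) this)]
    · simp [hp]
  · intro n hn
    by_cases hp : n.Prime
    · have : x < n := (Nat.floor_lt hx.le).1 (by simpa [Nat.lt_succ_iff] using hn)
      rw [if_neg (Real.log_lt_log hx this).not_ge]
    · simp [hp]

/-- The third theorem of Mertens. -/
theorem tendsto_log_mul_prod_one_sub_inv :
    Tendsto (fun x : ℝ => Real.log x *
      ∏ p ∈ (Finset.range (⌊x⌋₊ + 1)).filter Nat.Prime, (1 - (p : ℝ)⁻¹)) atTop
      (nhds (Real.exp (-Real.eulerMascheroniConstant))) := by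
  have hL := (isLogLaplace_eulerProduct (c := fun _ => 1) (k := 0) (ρ := 1)
    (fun _ => zero_le_one) rfl (fun _ => (one_mul _).symm) (fun _ _ _ => by simp)
    (fun s hs => by simpa using hs) one_pos
    (by simpa [Real.rpow_neg] using tendsto_sub_mul_tsum_nat_rpow)).tendsto_sum_primes
  rw [Real.log_one, zero_add] at hL
  refine ((Real.continuous_exp.tendsto _).comp hL.neg).congr' ?_
  filter_upwards [eventually_gt_atTop 1] with x hx
  have hF : ∀ p ∈ (Finset.range (⌊x⌋₊ + 1)).filter Nat.Prime,
      Real.log (∑' e : ℕ, 1 * ((p : ℝ)⁻¹) ^ e) = -Real.log (1 - (p : ℝ)⁻¹) := by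
    intro p hp
    have hp : p.Prime := (Finset.mem_filter.1 hp).2
    simp only [one_mul]
    rw [tsum_geometric_of_lt_one (by positivity)
      (inv_lt_one_of_one_lt₀ (by exact_mod_cast hp.one_lt)),
      Real.log_inv]
  have hpos : ∀ p ∈ (Finset.range (⌊x⌋₊ + 1)).filter Nat.Prime, 0 < 1 - (p : ℝ)⁻¹ := by
    intro p hp
    have hp : p.Prime := (Finset.mem_filter.1 hp).2
    exact sub_pos.2 (inv_lt_one_of_one_lt₀ (by exact_mod_cast hp.one_lt))
  simp only [Function.comp_apply]
  rw [Finset.sum_congr rfl hF, Finset.sum_neg_distrib, neg_sub, sub_neg_eq_add, Real.exp_add,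
    Real.exp_log (Real.log_pos hx), ← Real.log_prod fun p hp => (hpos p hp).ne',
    Real.exp_log (Finset.prod_pos hpos)]

theorem abs_log_one_sub_add_le {y : ℝ} (h : y ≤ 1 / 2) :
    |Real.log (1 - y) + y| ≤ 2 * y ^ 2 := by
  have hpos : 0 < 1 - y := by linarith
  have h1 := Real.log_le_sub_one_of_pos hpos
  have h2 := Real.one_sub_inv_le_log_of_pos hpos
  have h3 : (1 - y)⁻¹ ≤ 1 + y + 2 * y ^ 2 := by
    rw [inv_le_iff_one_le_mul₀ hpos]
    nlinarith [mul_nonneg (sq_nonneg y) (sub_nonneg.2 h)]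
  rw [abs_le]
  constructor <;> nlinarith [sq_nonneg y]

theorem summable_log_localFactor_add_log {c : ℕ → ℝ} {k N : ℕ} {w : ℕ → ℝ} (hc : ∀ n, 0 ≤ c n)
    (hc1 : c 1 = 1) (hck : ∀ p e : ℕ, p.Prime → c (p ^ e) ≤ ((e : ℝ) + 1) ^ k)
    (hw : ∀ p, p.Prime → N ≤ p → c p = w p) :
    Summable fun n : ℕ => if n.Prime then
      Real.log (∑' e, c (n ^ e) * ((n : ℝ)⁻¹) ^ e) + Real.log (1 - w n / ((n : ℝ) - 1)) else 0 := by
  obtain ⟨K, hK0, hK⟩ := exists_abs_log_localFactor_sub_le k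
  set W : ℝ := 2 ^ k with hW
  have hW0 : 0 ≤ W := by positivity
  refine Summable.of_norm_bounded_eventually_nat
    (g := fun n : ℕ => (K + 8 * W ^ 2 + 2 * W) * ((n : ℝ) ^ 2)⁻¹)
    ((Real.summable_nat_pow_inv.2 one_lt_two).mul_left _) ?_
  filter_upwards [eventually_ge_atTop N, eventually_ge_atTop 2,
    tendsto_natCast_atTop_atTop.eventually_ge_atTop (4 * W)] with n hN h2 hnW
  by_cases hp : n.Prime
  swap
  · simp only [if_neg hp, norm_zero]
    positivity
  have hn2 : (2 : ℝ) ≤ n := by exact_mod_cast h2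
  have hn0 : (0 : ℝ) < n := by linarith
  rw [if_pos hp, Real.norm_eq_abs, ← hw n hp hN]
  have hcn : c n ≤ W := by
    have := hck n 1 hp
    rw [pow_one] at this
    refine this.trans_eq ?_
    rw [hW]
    norm_num
  have h1 := hK (fun e => c (n ^ e)) (n : ℝ)⁻¹ (fun e => hc _) (fun e => hck n e hp)
    (by simpa using hc1) (by positivity) (by rw [one_div]; exact inv_anti₀ two_pos hn2)
  simp only [pow_one] at h1
  have hy0 : 0 ≤ c n / ((n : ℝ) - 1) := div_nonneg (hc n) (by linarith)
  have hyW : c n / ((n : ℝ) - 1) ≤ 2 * W * (n : ℝ)⁻¹ := by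
    rw [← div_eq_mul_inv, div_le_div_iff₀ (by linarith) hn0]
    nlinarith [mul_nonneg hW0 (sub_nonneg.2 hn2), mul_nonneg (sub_nonneg.2 hcn) hn0.le]
  have hy : c n / ((n : ℝ) - 1) ≤ 1 / 2 := by
    refine hyW.trans ?_
    rw [← div_eq_mul_inv, div_le_div_iff₀ hn0 two_pos]
    linarith
  have h3 := abs_log_one_sub_add_le hy
  have h4 : (c n / ((n : ℝ) - 1)) ^ 2 ≤ (2 * W * (n : ℝ)⁻¹) ^ 2 := pow_le_pow_left₀ hy0 hyW 2
  have h5 : c n / ((n : ℝ) - 1) - c n * (n : ℝ)⁻¹ = c n / ((n : ℝ) - 1) * (n : ℝ)⁻¹ := by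
    have : (n : ℝ) - 1 ≠ 0 := by linarith
    field_simp
    ring
  have h6 : c n / ((n : ℝ) - 1) * (n : ℝ)⁻¹ ≤ 2 * W * (n : ℝ)⁻¹ * (n : ℝ)⁻¹ :=
    mul_le_mul_of_nonneg_right hyW (by positivity)
  have h7 : 0 ≤ c n / ((n : ℝ) - 1) * (n : ℝ)⁻¹ := by positivity
  rw [← inv_pow]
  rw [abs_le] at h1 h3 ⊢
  constructor <;> nlinarith

theorem exists_tendsto_log_mul_prod {c : ℕ → ℝ} {k N : ℕ} {ρ : ℝ} {w : ℕ → ℝ}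
    (hc : ∀ n, 0 ≤ c n) (hc1 : c 1 = 1)
    (hck : ∀ p e : ℕ, p.Prime → c (p ^ e) ≤ ((e : ℝ) + 1) ^ k)
    (hL : IsLogLaplace
      (fun n => if n.Prime then Real.log (∑' e, c (n ^ e) * ((n : ℝ)⁻¹) ^ e) else 0)
      (fun n => Real.log n) ρ)
    (hw : ∀ p, p.Prime → N ≤ p → c p = w p)
    (hpos : ∀ p, p.Prime → 0 < 1 - w p / ((p : ℝ) - 1)) :
    ∃ L : ℝ, 0 < L ∧ Tendsto (fun x : ℝ => Real.log x *
      ∏ p ∈ (Finset.range (⌊x⌋₊ + 1)).filter Nat.Prime, (1 - w p / ((p : ℝ) - 1)))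
      atTop (nhds L) := by
  have hS := (summable_log_localFactor_add_log hc hc1 hck hw).hasSum.tendsto_sum_nat.comp
    ((tendsto_add_atTop_nat 1).comp (tendsto_nat_floor_atTop (α := ℝ)))
  refine ⟨_, Real.exp_pos _,
    ((Real.continuous_exp.tendsto _).comp (hS.sub hL.tendsto_sum_primes)).congr' ?_⟩
  filter_upwards [eventually_gt_atTop 1] with x hx
  have hpos' : ∀ p ∈ (Finset.range (⌊x⌋₊ + 1)).filter Nat.Prime,
      0 < 1 - w p / ((p : ℝ) - 1) := fun p hp => hpos p (Finset.mem_filter.1 hp).2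
  simp only [Function.comp_apply]
  rw [← Finset.sum_filter, Finset.sum_add_distrib, sub_sub_eq_add_sub, add_assoc,
    add_sub_cancel_left, Real.exp_add, mul_comm (Real.exp _), Real.exp_log (Real.log_pos hx),
    ← Real.log_prod fun p hp => (hpos' p hp).ne', Real.exp_log (Finset.prod_pos hpos')]

end PrimeProducts

theorem nu2_prime_eq_nu1_add_one (f : ℤ[X]) {p : ℕ} (hp : p.Prime) : nu2 f p = nu1 f p + 1 := by
  unfold nu1 nu2
  have h0 : 0 ∉ (Finset.range p).filter
      (fun a : ℕ => Nat.gcd a p = 1 ∧ (p : ℤ) ∣ f.eval (a : ℤ)) := by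
    simp [hp.ne_one]
  rw [← Finset.card_insert_of_notMem h0]
  congr 1
  ext a
  simp only [Finset.mem_insert, Finset.mem_filter, Finset.mem_range]
  rcases Nat.eq_zero_or_pos a with rfl | ha
  · simp [hp.pos]
  · refine ⟨fun ⟨hap, h⟩ => Or.inr ⟨hap, ?_⟩, fun h => ?_⟩
    · have hn : ¬ p ∣ a := Nat.not_dvd_of_pos_of_lt ha hap
      exact ⟨(hp.coprime_iff_not_dvd.2 hn).symm,
        ((Nat.prime_iff_prime_int.1 hp).dvd_or_dvd h).resolve_left fun h' =>
          hn (Int.natCast_dvd_natCast.1 h')⟩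
    · obtain ⟨hap, -, h⟩ := h.resolve_left ha.ne'
      exact ⟨hap, h.mul_left _⟩

theorem one_sub_nu2_div_eq (f : ℤ[X]) {p : ℕ} (hp : p.Prime) :
    1 - (nu2 f p : ℝ) / p = (1 - (p : ℝ)⁻¹) * (1 - (nu1 f p : ℝ) / ((p : ℝ) - 1)) := by
  have h1 : (1 : ℝ) < p := by exact_mod_cast hp.one_lt
  have h0 : (p : ℝ) ≠ 0 := by linarith
  have h2 : (p : ℝ) - 1 ≠ 0 := by linarith
  rw [nu2_prime_eq_nu1_add_one f hp, Nat.cast_add, Nat.cast_one]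
  field_simp
  ring

theorem nu1_nu2_product_asymptotics (f : Polynomial ℤ) (hirr : Irreducible f)
    (hdeg : 1 ≤ f.natDegree) (hconst : f.coeff 0 ≠ 0)
    (hloc : ∀ p : ℕ, p.Prime → nu1 f p < p - 1) :
    ∃ L₁ L₂ : ℝ, 0 < L₁ ∧ 0 < L₂ ∧
      Tendsto (fun x : ℝ => Real.log x *
          ∏ p ∈ (Finset.range (⌊x⌋₊ + 1)).filter Nat.Prime,
            (1 - (nu1 f p : ℝ) / ((p : ℝ) - 1)))
        atTop (nhds L₁) ∧
      Tendsto (fun x : ℝ => (Real.log x) ^ 2 *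
          ∏ p ∈ (Finset.range (⌊x⌋₊ + 1)).filter Nat.Prime,
            (1 - (nu2 f p : ℝ) / (p : ℝ)))
        atTop (nhds L₂) ∧
      L₂ = Real.exp (-Real.eulerMascheroniConstant) * L₁ := by
  obtain ⟨K, _, _, x, hx, htop, hrank⟩ := exists_numberField_root hirr hdeg
  obtain ⟨θ, hθtop, hθ⟩ := exists_ringOfIntegers_minpoly_eq hdeg hx htop hrank
  obtain ⟨N, hN⟩ := idealCount_prime_eq_nu1 hdeg hconst hθtop hθ
  have hck : ∀ p e : ℕ, p.Prime → (idealCount K (p ^ e) : ℝ) ≤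
      ((e : ℝ) + 1) ^ Module.finrank ℤ (NumberField.RingOfIntegers K) := fun p e hp => by
    exact_mod_cast idealCount_prime_pow_le K hp e
  have hone : ((idealCount K 1 : ℕ) : ℝ) = 1 := by rw [idealCount_one, Nat.cast_one]
  have hL := isLogLaplace_eulerProduct (c := fun n => (idealCount K n : ℝ))
    (fun n => Nat.cast_nonneg _) hone (fun h => by rw [idealCount_mul K h, Nat.cast_mul]) hck
    (fun s hs => summable_idealCount K hs) (NumberField.dedekindZeta_residue_pos K)
    (tendsto_sub_one_mul_tsum_idealCount K)
  have hpos : ∀ p : ℕ, p.Prime → 0 < 1 - (nu1 f p : ℝ) / ((p : ℝ) - 1) := fun p hp => by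
    have h1 : (1 : ℝ) < p := by exact_mod_cast hp.one_lt
    have h2 : (nu1 f p : ℝ) < (p : ℝ) - 1 := by
      rw [← Nat.cast_one, ← Nat.cast_sub hp.one_le]
      exact_mod_cast hloc p hp
    rw [sub_pos, div_lt_one (by linarith)]
    exact h2
  obtain ⟨L, hL0, hLim⟩ := exists_tendsto_log_mul_prod (w := fun p => (nu1 f p : ℝ))
    (fun n => Nat.cast_nonneg _) hone hck hL (fun p hp h => by rw [hN p hp h]) hpos
  refine ⟨L, _, hL0, mul_pos (Real.exp_pos _) hL0, hLim,
    (tendsto_log_mul_prod_one_sub_inv.mul hLim).congr fun x => ?_, rfl⟩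
  rw [Finset.prod_congr rfl fun p hp => one_sub_nu2_div_eq f (Finset.mem_filter.1 hp).2,
    Finset.prod_mul_distrib]
  ring
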